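/- Let φ be a meromorphic Jacobi form of weight k and index m with poles supported on S, all poles of order at most 2. Then for every s ∈ S and every γ = (a,b;c,d) ∈ SL(2,ℤ) one has E_s((aτ+b)/(cτ+d)) = (cτ+d)^{k−2}·E_{sγ}(τ) and D_s((aτ+b)/(cτ+d)) = (cτ+d)^{k−1}·D_{sγ}(τ), where sγ := (αa+βc, αb+βd) for s = (α,β). -/

import Mathlib

noncomputable section

open Complex Filter Topology MeasureTheory
open scoped Classical

/-- `ee x = e^{2πix}`. -/
def ee (x : ℂ) : ℂ := Complex.exp (2 * (Real.pi : ℂ) * Complex.I * x)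

/-- The index-`m` elliptic transformation law on `ℍ × ℂ`. -/
def EllipticLaw (m : ℕ) (φ : ℂ → ℂ → ℂ) : Prop :=
  ∀ τ : ℂ, 0 < τ.im → ∀ z : ℂ, ∀ lam mu : ℤ,
    φ τ (z + (lam : ℂ) * τ + (mu : ℂ)) =
      ee (-(m : ℂ) * ((lam : ℂ) ^ 2 * τ + 2 * (lam : ℂ) * z)) * φ τ z

/-- The weight-`k` index-`m` modular transformation law on `ℍ × ℂ`. -/
def ModularLaw (k : ℤ) (m : ℕ) (φ : ℂ → ℂ → ℂ) : Prop :=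
  ∀ τ : ℂ, 0 < τ.im → ∀ z : ℂ, ∀ a b c d : ℤ, a * d - b * c = 1 →
    φ (((a : ℂ) * τ + (b : ℂ)) / ((c : ℂ) * τ + (d : ℂ))) (z / ((c : ℂ) * τ + (d : ℂ))) =
      ((c : ℂ) * τ + (d : ℂ)) ^ k *
        ee ((m : ℂ) * (c : ℂ) * z ^ 2 / ((c : ℂ) * τ + (d : ℂ))) * φ τ z

/-- The theta function `θ_{m,ℓ}(τ,z) = ∑_{r ≡ ℓ (mod 2m)} q^{r²/4m} y^r`. -/
def jTheta (m : ℕ) (l : ℤ) (τ z : ℂ) : ℂ :=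
  ∑' n : ℤ, ee (((l : ℂ) + 2 * (m : ℂ) * (n : ℂ)) ^ 2 / (4 * (m : ℂ)) * τ +
      ((l : ℂ) + 2 * (m : ℂ) * (n : ℂ)) * z)

/-- The point `z_s = ατ + β` for `s = (α,β) ∈ ℚ²`. -/
def zpt (s : ℚ × ℚ) (τ : ℂ) : ℂ := (s.1 : ℚ) * τ + (s.2 : ℚ)

/-- A meromorphic Jacobi form of weight `k` and index `m` with poles supported on `S`. -/
structure MeroJacobiForm (k : ℤ) (m : ℕ) (S : Set (ℚ × ℚ)) where
  toFun : ℂ → ℂ → ℂ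
  lattice_inv : ∀ s ∈ S, ∀ lam mu : ℤ, (s.1 + (lam : ℚ), s.2 + (mu : ℚ)) ∈ S
  sl_inv : ∀ s ∈ S, ∀ a b c d : ℤ, a * d - b * c = 1 →
      (s.1 * (a : ℚ) + s.2 * (c : ℚ), s.1 * (b : ℚ) + s.2 * (d : ℚ)) ∈ S
  finite_classes : Set.Finite {s : ℚ × ℚ | s ∈ S ∧ 0 ≤ s.1 ∧ s.1 < 1 ∧ 0 ≤ s.2 ∧ s.2 < 1}
  elliptic : EllipticLaw m toFun
  modular : ModularLaw k m toFun
  holo : ∀ τ : ℂ, 0 < τ.im → ∀ z : ℂ, (∀ s ∈ S, z ≠ zpt s τ) →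
      DifferentiableAt ℂ (fun p : ℂ × ℂ => toFun p.1 p.2) (τ, z)
  merom : ∀ τ : ℂ, 0 < τ.im → ∀ s ∈ S, ∃ (g : ℂ → ℂ) (nn : ℕ), AnalyticAt ℂ g (zpt s τ) ∧
      ∀ᶠ z in 𝓝[≠] (zpt s τ), toFun τ z = g z / (z - zpt s τ) ^ nn

/-- All poles of `Φ` have order at most 2. -/
def HasAtMostDoublePoles {k : ℤ} {m : ℕ} {S : Set (ℚ × ℚ)} (Φ : MeroJacobiForm k m S) : Prop :=
  ∀ τ : ℂ, 0 < τ.im → ∀ s ∈ S, ∃ g : ℂ → ℂ, AnalyticAt ℂ g (zpt s τ) ∧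
    ∀ᶠ z in 𝓝[≠] (zpt s τ), Φ.toFun τ z = g z / (z - zpt s τ) ^ 2

/-- `E s` and `D s` are the Laurent data of `φ` at `z_s`, i.e.
`e(mα z_s)·φ(τ, z_s+ε) = E_s(τ)/(2πiε)² + (D_s(τ) - 2mα·E_s(τ))/(2πiε) + O(1)` as `ε → 0`. -/
def IsLaurentData (m : ℕ) (S : Set (ℚ × ℚ)) (φ : ℂ → ℂ → ℂ) (E D : ℚ × ℚ → ℂ → ℂ) : Prop :=
  ∀ s ∈ S, ∀ τ : ℂ, 0 < τ.im →
    Filter.Tendsto (fun ε : ℂ =>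
        (2 * (Real.pi : ℂ) * Complex.I * ε) ^ 2 * ee ((m : ℂ) * (s.1 : ℚ) * zpt s τ) *
          φ τ (zpt s τ + ε))
      (𝓝[≠] (0 : ℂ)) (𝓝 (E s τ)) ∧
    Filter.Tendsto (fun ε : ℂ =>
        2 * (Real.pi : ℂ) * Complex.I * ε *
          (ee ((m : ℂ) * (s.1 : ℚ) * zpt s τ) * φ τ (zpt s τ + ε) -
            E s τ / (2 * (Real.pi : ℂ) * Complex.I * ε) ^ 2))
      (𝓝[≠] (0 : ℂ)) (𝓝 (D s τ - 2 * (m : ℂ) * (s.1 : ℚ) * E s τ))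

/-!
Near `z_s` the twisted germ `ε ↦ e(mα z_s) φ(τ, z_s + ε)` of a function obeying the modular law
transforms under `γ` by the substitution `ε ↦ (cτ + d) ε` and multiplication by
`(cτ + d)^k e(mc(2 z_{sγ} ε + (cτ + d) ε²))`. The substitution and the first factor account for the
weights `k - 2` and `k - 1`. The derivative of the exponential at `ε = 0` mixes a multiple of `E`
into the residue; since `α + c z_{sγ} = α' (cτ + d)`, where `α'` is the first coordinate of `sγ`,
this is exactly absorbed by the correction `2mα E_s` in the definition of `D_s`.
-/

section PolarPart

variable {𝕜 : Type*} [NontriviallyNormedField 𝕜] {f u : 𝕜 → 𝕜} {A B A' B' u' j : 𝕜}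

/-- `f x = A / x² + B / x + o(1 / x)` as `x → 0`, the polar part of an at most double pole at `0`.
The little-o remainder is all that is needed to determine `A` and `B`. -/
def HasPolarPart (f : 𝕜 → 𝕜) (A B : 𝕜) : Prop :=
  Tendsto (fun x => x * (f x - A / x ^ 2)) (𝓝[≠] 0) (𝓝 B)

namespace HasPolarPart

theorem tendsto_sq_mul (hf : HasPolarPart f A B) :
    Tendsto (fun x => x ^ 2 * f x) (𝓝[≠] 0) (𝓝 A) := by
  have hx : Tendsto (fun x : 𝕜 => x) (𝓝[≠] 0) (𝓝 0) := nhdsWithin_le_nhds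
  have hlim := (hx.mul hf).add_const A
  rw [zero_mul, zero_add] at hlim
  refine hlim.congr' ?_
  filter_upwards [self_mem_nhdsWithin] with x (hx : x ≠ 0)
  field_simp
  ring

theorem unique (hf : HasPolarPart f A B) (hf' : HasPolarPart f A' B') : A = A' ∧ B = B' := by
  obtain rfl : A = A' := tendsto_nhds_unique hf.tendsto_sq_mul hf'.tendsto_sq_mul
  exact ⟨rfl, tendsto_nhds_unique hf hf'⟩

theorem comp_mul_left (hf : HasPolarPart f A B) (hj : j ≠ 0) :
    HasPolarPart (fun x => f (j * x)) (A / j ^ 2) (B / j) := by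
  have hscale : Tendsto (fun x => j * x) (𝓝[≠] 0) (𝓝[≠] 0) := by
    simpa using ((hasDerivAt_id (0 : 𝕜)).const_mul j).tendsto_nhdsNE (by simpa using hj)
  refine ((hf.comp hscale).div_const j).congr' ?_
  filter_upwards [self_mem_nhdsWithin] with x (hx : x ≠ 0)
  simp only [Function.comp_apply]
  field_simp

theorem mul_of_hasDerivAt (hf : HasPolarPart f A B) (hu : HasDerivAt u u' 0) :
    HasPolarPart (fun x => u x * f x) (u 0 * A) (u 0 * B + u' * A) := by
  have hu_cont : Tendsto u (𝓝[≠] 0) (𝓝 (u 0)) :=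
    hu.continuousAt.tendsto.mono_left nhdsWithin_le_nhds
  have hu_slope : Tendsto (fun x => x⁻¹ * (u x - u 0)) (𝓝[≠] 0) (𝓝 u') := by
    simpa using hu.tendsto_slope_zero
  refine ((hu_cont.mul hf).add (hu_slope.mul_const A)).congr' ?_
  filter_upwards [self_mem_nhdsWithin] with x (hx : x ≠ 0)
  field_simp
  ring

end HasPolarPart

end PolarPart

section ExponentialFunction

theorem ee_zero : ee 0 = 1 := by
  simp [ee]

theorem ee_add (x y : ℂ) : ee (x + y) = ee x * ee y := by
  simp only [ee, mul_add, Complex.exp_add]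

theorem hasDerivAt_ee (x : ℂ) : HasDerivAt ee (ee x * (2 * Real.pi * I)) x :=
  (hasDerivAt_const_mul _).cexp

theorem hasDerivAt_ee_mul_add_mul_sq (p q : ℂ) :
    HasDerivAt (fun x => ee (p * x + q * x ^ 2)) (2 * Real.pi * I * p) 0 := by
  have hquad : HasDerivAt (fun x => p * x + q * x ^ 2) p 0 := by
    simpa using (hasDerivAt_const_mul p).fun_add ((hasDerivAt_pow 2 (0 : ℂ)).const_mul q)
  simpa [ee_zero, Function.comp_def] using (hasDerivAt_ee _).comp 0 hquad

end ExponentialFunction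

section MoebiusAction

variable {a b c d : ℤ} {τ : ℂ}

/-- The right action `(α, β) ↦ (αa + βc, αb + βd)` of integral matrices `(a, b; c, d)` on `ℚ²`. -/
def rightAct (s : ℚ × ℚ) (a b c d : ℤ) : ℚ × ℚ :=
  (s.1 * a + s.2 * c, s.1 * b + s.2 * d)

theorem denom_ne_zero_of_det_eq_one (hdet : a * d - b * c = 1) (hτ : 0 < τ.im) :
    (c : ℂ) * τ + d ≠ 0 := by
  have hcd : ![(c : ℝ), d] ≠ 0 := by
    intro h
    have hc : c = 0 := by simpa using congrFun h 0
    have hd : d = 0 := by simpa using congrFun h 1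
    simp [hc, hd] at hdet
  simpa using UpperHalfPlane.linear_ne_zero ⟨τ, hτ⟩ hcd

theorem im_moebius_pos (hdet : a * d - b * c = 1) (hτ : 0 < τ.im) :
    0 < (((a : ℂ) * τ + b) / ((c : ℂ) * τ + d)).im := by
  let γ : Matrix.SpecialLinearGroup (Fin 2) ℤ :=
    ⟨!![a, b; c, d], by rw [Matrix.det_fin_two_of, hdet]⟩
  have hγ := (γ • (⟨τ, hτ⟩ : UpperHalfPlane)).im_pos
  rw [← UpperHalfPlane.coe_im, UpperHalfPlane.coe_specialLinearGroup_apply] at hγ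
  simpa [γ] using hγ

theorem zpt_moebius (s : ℚ × ℚ) (hj : (c : ℂ) * τ + d ≠ 0) :
    zpt s ((a * τ + b) / (c * τ + d)) = zpt (rightAct s a b c d) τ / (c * τ + d) := by
  simp only [zpt, rightAct]
  push_cast
  rw [eq_div_iff hj, add_mul, mul_assoc, div_mul_cancel₀ _ hj]
  ring

theorem fst_add_mul_zpt_rightAct (s : ℚ × ℚ) (hdet : a * d - b * c = 1) :
    s.1 + c * zpt (rightAct s a b c d) τ = (rightAct s a b c d).1 * (c * τ + d) := by
  have hdetC : (a : ℂ) * d - b * c = 1 := by exact_mod_cast hdet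
  simp only [zpt, rightAct]
  push_cast
  linear_combination -(s.1 : ℂ) * hdetC

end MoebiusAction

/-- The function `ε ↦ e(mα z_s) φ(τ, z_s + ε)` whose polar part at `0` is recorded by `E_s(τ)` and
`D_s(τ)`. -/
def twistedGerm (m : ℕ) (φ : ℂ → ℂ → ℂ) (s : ℚ × ℚ) (τ ε : ℂ) : ℂ :=
  ee (m * s.1 * zpt s τ) * φ τ (zpt s τ + ε)

theorem IsLaurentData.hasPolarPart_twistedGerm {m : ℕ} {S : Set (ℚ × ℚ)} {φ : ℂ → ℂ → ℂ}
    {E D : ℚ × ℚ → ℂ → ℂ} (hED : IsLaurentData m S φ E D) {s : ℚ × ℚ} (hs : s ∈ S) {τ : ℂ}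
    (hτ : 0 < τ.im) :
    HasPolarPart (twistedGerm m φ s τ) (E s τ / (2 * Real.pi * I) ^ 2)
      ((D s τ - 2 * m * s.1 * E s τ) / (2 * Real.pi * I)) := by
  have hpi : 2 * (Real.pi : ℂ) * I ≠ 0 := two_pi_I_ne_zero
  refine ((hED s hs τ hτ).2.div_const (2 * Real.pi * I)).congr fun ε => ?_
  rw [← twistedGerm, mul_pow, ← div_div (E s τ), mul_assoc _ ε, mul_div_cancel_left₀ _ hpi]

namespace ModularLaw

variable {k : ℤ} {m : ℕ} {φ : ℂ → ℂ → ℂ} {a b c d : ℤ} {τ : ℂ}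

theorem twistedGerm_moebius (hφ : ModularLaw k m φ) (s : ℚ × ℚ) (hdet : a * d - b * c = 1)
    (hτ : 0 < τ.im) (ε : ℂ) :
    twistedGerm m φ s ((a * τ + b) / (c * τ + d)) ε =
      (c * τ + d) ^ k *
        ee (2 * m * c * zpt (rightAct s a b c d) τ * ε + m * c * (c * τ + d) * ε ^ 2) *
        twistedGerm m φ (rightAct s a b c d) τ ((c * τ + d) * ε) := by
  have hj := denom_ne_zero_of_det_eq_one hdet hτ
  have hα := fst_add_mul_zpt_rightAct (τ := τ) s hdet
  simp only [twistedGerm]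
  rw [zpt_moebius s hj]
  set j := (c : ℂ) * τ + d
  set s' := rightAct s a b c d
  set z := zpt s' τ
  have hpoint : z / j + ε = (z + j * ε) / j := by field_simp
  have hfactor : ee (m * s.1 * (z / j)) * ee (m * c * (z + j * ε) ^ 2 / j) =
      ee (2 * m * c * z * ε + m * c * j * ε ^ 2) * ee (m * s'.1 * z) := by
    rw [← ee_add, ← ee_add]
    congr 1
    field_simp
    linear_combination m * z * hα
  rw [hpoint, hφ τ hτ _ a b c d hdet]
  linear_combination j ^ k * φ τ (z + j * ε) * hfactor

theorem hasPolarPart_twistedGerm_moebius (hφ : ModularLaw k m φ) {s : ℚ × ℚ}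
    (hdet : a * d - b * c = 1) (hτ : 0 < τ.im) {A B : ℂ}
    (hAB : HasPolarPart (twistedGerm m φ (rightAct s a b c d) τ) A B) :
    HasPolarPart (twistedGerm m φ s ((a * τ + b) / (c * τ + d)))
      ((c * τ + d) ^ (k - 2) * A)
      ((c * τ + d) ^ (k - 1) * B + (c * τ + d) ^ (k - 2) *
        (2 * Real.pi * I * (2 * m * c * zpt (rightAct s a b c d) τ)) * A) := by
  have hj := denom_ne_zero_of_det_eq_one hdet hτ
  rw [funext (hφ.twistedGerm_moebius s hdet hτ)]
  set j := (c : ℂ) * τ + d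
  set z := zpt (rightAct s a b c d) τ
  have hfactor := (hasDerivAt_ee_mul_add_mul_sq (2 * m * c * z) (m * c * j)).const_mul (j ^ k)
  have hfactor_zero : ee (2 * m * c * z * 0 + m * c * j * 0 ^ 2) = 1 := by simp [ee_zero]
  have hpow_sub_two : j ^ (k - 2) = j ^ k / j ^ 2 := by rw [zpow_sub₀ hj, zpow_ofNat]
  convert (hAB.comp_mul_left hj).mul_of_hasDerivAt hfactor using 1
  · rw [hfactor_zero, hpow_sub_two]
    ring
  · rw [hfactor_zero, hpow_sub_two, zpow_sub_one₀ hj]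
    ring

end ModularLaw

theorem laurent_coefficients_are_modular_general {k : ℤ} {m : ℕ} {S : Set (ℚ × ℚ)}
    {φ : ℂ → ℂ → ℂ} (hφ : ModularLaw k m φ) {E D : ℚ × ℚ → ℂ → ℂ}
    (hED : IsLaurentData m S φ E D) {s : ℚ × ℚ} (hs : s ∈ S) {a b c d : ℤ}
    (hdet : a * d - b * c = 1) (hs' : rightAct s a b c d ∈ S) {τ : ℂ} (hτ : 0 < τ.im) :
    E s ((a * τ + b) / (c * τ + d)) = (c * τ + d) ^ (k - 2) * E (rightAct s a b c d) τ ∧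
      D s ((a * τ + b) / (c * τ + d)) = (c * τ + d) ^ (k - 1) * D (rightAct s a b c d) τ := by
  have hpi : 2 * (Real.pi : ℂ) * I ≠ 0 := two_pi_I_ne_zero
  have hj := denom_ne_zero_of_det_eq_one hdet hτ
  have hα := fst_add_mul_zpt_rightAct (τ := τ) s hdet
  obtain ⟨hleading, hresidue⟩ :=
    (hED.hasPolarPart_twistedGerm hs (im_moebius_pos hdet hτ)).unique
      (hφ.hasPolarPart_twistedGerm_moebius hdet hτ (hED.hasPolarPart_twistedGerm hs' hτ))
  set j := (c : ℂ) * τ + d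
  set s' := rightAct s a b c d
  have hpow : j ^ (k - 1) = j ^ (k - 2) * j := by
    rw [← zpow_add_one₀ hj, show k - 2 + 1 = k - 1 by ring]
  have hE : E s ((a * τ + b) / j) = j ^ (k - 2) * E s' τ := by
    rwa [← mul_div_assoc, div_left_inj' (pow_ne_zero 2 hpi)] at hleading
  have hD : D s ((a * τ + b) / j) - 2 * m * s.1 * E s ((a * τ + b) / j) =
      j ^ (k - 1) * (D s' τ - 2 * m * s'.1 * E s' τ) +
        j ^ (k - 2) * (2 * m * c * zpt s' τ) * E s' τ := by
    field_simp at hresidue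
    linear_combination hresidue
  refine ⟨hE, ?_⟩
  rw [hE, hpow] at hD
  rw [hpow]
  linear_combination hD + 2 * m * j ^ (k - 2) * E s' τ * hα

/-- Theorem: for a meromorphic Jacobi form of weight `k` and index `m` with poles of order
at most 2 supported on `S`, the Laurent coefficient functions satisfy
`E_s(γτ) = (cτ+d)^{k-2}·E_{sγ}(τ)` and `D_s(γτ) = (cτ+d)^{k-1}·D_{sγ}(τ)` for all
`γ ∈ SL(2,ℤ)`, where `sγ = (αa+βc, αb+βd)`. -/
theorem laurent_coefficients_are_modular (k : ℤ) (m : ℕ) (hm : 0 < m)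
    (S : Set (ℚ × ℚ)) (Φ : MeroJacobiForm k m S) (hpoles : HasAtMostDoublePoles Φ)
    (E D : ℚ × ℚ → ℂ → ℂ) (hED : IsLaurentData m S Φ.toFun E D) :
    ∀ s ∈ S, ∀ a b c d : ℤ, a * d - b * c = 1 → ∀ τ : ℂ, 0 < τ.im →
      E s (((a : ℂ) * τ + (b : ℂ)) / ((c : ℂ) * τ + (d : ℂ))) =
        ((c : ℂ) * τ + (d : ℂ)) ^ (k - 2) *
          E (s.1 * (a : ℚ) + s.2 * (c : ℚ), s.1 * (b : ℚ) + s.2 * (d : ℚ)) τ ∧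
      D s (((a : ℂ) * τ + (b : ℂ)) / ((c : ℂ) * τ + (d : ℂ))) =
        ((c : ℂ) * τ + (d : ℂ)) ^ (k - 1) *
          D (s.1 * (a : ℚ) + s.2 * (c : ℚ), s.1 * (b : ℚ) + s.2 * (d : ℚ)) τ := by
  intro s hs a b c d hdet τ hτ
  exact laurent_coefficients_are_modular_general Φ.modular hED hs hdet
    (Φ.sl_inv s hs a b c d hdet) hτ
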